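/- arXiv:1710.00298 — 2 statements merged into one kernel-verified Lean document; each statement's English description precedes it below -/
import Mathlib

section
/- If H is a hypergraph on n vertices that contains no isolated vertices and in which every edge has at least three vertices, then γ_g(H) ≤ (5/9)·n. -/
attribute [local instance 10] Classical.propDecidable

variable {V : Type}

/-- The closed neighborhood of a vertex in a hypergraph given by its edge set. -/
noncomputable def closedNbhd [Fintype V] (H : Finset (Finset V)) (v : V) : Finset V :=
  Finset.univ.filter (fun u => u = v ∨ ∃ e ∈ H, u ∈ e ∧ v ∈ e)

private lemma card_sdiff_union_lt [Fintype V] {S T : Finset V} (h : ¬ T ⊆ S) :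
    (Finset.univ \ (S ∪ T)).card < (Finset.univ \ S).card := by
  classical
  obtain ⟨u, huT, huS⟩ := Finset.not_subset.mp h
  apply Finset.card_lt_card
  rw [Finset.ssubset_def]
  constructor
  · exact Finset.sdiff_subset_sdiff (Finset.Subset.refl _) Finset.subset_union_left
  · intro hc
    have hu : u ∈ Finset.univ \ S := by simp [huS]
    have := hc hu
    simp [huT] at this

/-- Value of the domination game on a hypergraph: `S` is the set of vertices already
dominated, `dom = true` iff Dominator is the next player to move.  A legal move is a vertex
dominating at least one new vertex; Dominator minimizes, Staller maximizes the total
number of moves, and both play optimally. -/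
noncomputable def domGameVal [Fintype V] (H : Finset (Finset V)) (dom : Bool) (S : Finset V) :
    ℕ :=
  if h : (Finset.univ.filter fun v => ¬ closedNbhd H v ⊆ S).Nonempty then
    1 + (if dom then
        (Finset.univ.filter fun v => ¬ closedNbhd H v ⊆ S).attach.inf'
          (Finset.attach_nonempty_iff.mpr h)
          (fun v => domGameVal H false (S ∪ closedNbhd H v.1))
      else
        (Finset.univ.filter fun v => ¬ closedNbhd H v ⊆ S).attach.sup'
          (Finset.attach_nonempty_iff.mpr h)
          (fun v => domGameVal H true (S ∪ closedNbhd H v.1)))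
  else 0
termination_by (Finset.univ \ S).card
decreasing_by
  · exact card_sdiff_union_lt (Finset.mem_filter.mp v.2).2
  · exact card_sdiff_union_lt (Finset.mem_filter.mp v.2).2

/-- The game domination number (Dominator starts). -/
noncomputable def gammaGame [Fintype V] (H : Finset (Finset V)) : ℕ :=
  domGameVal H true ∅

/-! Helper notions -/

structure TriN (N : V → Finset V) : Prop where
  hr : ∀ v, v ∈ N v
  hs : ∀ u v, u ∈ N v → v ∈ N u
  ht : ∀ u v, u ∈ N v → u ≠ v → ∃ w, w ∈ N u ∧ w ∈ N v ∧ w ≠ u ∧ w ≠ v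
  hi : ∀ v, ∃ u, u ∈ N v ∧ u ≠ v

noncomputable def dg (N : V → Finset V) (S : Finset V) (v : V) : ℕ := (N v \ S).card

noncomputable def ff (N : V → Finset V) (b : ℕ → ℕ) (S : Finset V) (v : V) : ℕ :=
  if v ∈ S then b (dg N S v) else 15

noncomputable def Phi [Fintype V] (N : V → Finset V) (b : ℕ → ℕ) (S : Finset V) : ℕ :=
  ∑ v, ff N b S v

def bA (k : ℕ) : ℕ := if k = 0 then 0 else 9

def bB (k : ℕ) : ℕ := if k = 0 then 0 else if k = 1 then 6 else if k = 2 then 7 else 9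

structure GoodB (b : ℕ → ℕ) : Prop where
  mono : ∀ i j, i ≤ j → b i ≤ b j
  le : ∀ i, b i ≤ 9
  zero : b 0 = 0

lemma bA_cases (k : ℕ) : (k = 0 ∧ bA k = 0) ∨ (1 ≤ k ∧ bA k = 9) := by
  unfold bA; split_ifs <;> omega

lemma bB_cases (k : ℕ) : (k = 0 ∧ bB k = 0) ∨ (k = 1 ∧ bB k = 6) ∨ (k = 2 ∧ bB k = 7) ∨
    (3 ≤ k ∧ bB k = 9) := by
  unfold bB; split_ifs <;> omega

lemma goodA : GoodB bA := by
  refine ⟨fun i j h => ?_, fun i => ?_, rfl⟩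
  · have := bA_cases i; have := bA_cases j; omega
  · have := bA_cases i; omega

lemma goodB : GoodB bB := by
  refine ⟨fun i j h => ?_, fun i => ?_, rfl⟩
  · have := bB_cases i; have := bB_cases j; omega
  · have := bB_cases i; omega

lemma sum_list [Fintype V] (l : List (V × ℕ)) : ∀ (F G : V → ℕ), (∀ v, G v ≤ F v) →
    (l.map Prod.fst).Nodup → (∀ p ∈ l, G p.1 + p.2 ≤ F p.1) →
    ∑ v, G v + (l.map Prod.snd).sum ≤ ∑ v, F v := by
  classical
  induction l with
  | nil => intro F G h _ _; simpa using Finset.sum_le_sum fun v _ => h v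
  | cons a l ih =>
    intro F G h hn hp
    simp only [List.map_cons, List.nodup_cons, List.mem_map, not_exists, not_and] at hn
    have ha := hp a (by simp)
    have h1 := ih (Function.update F a.1 (F a.1 - a.2)) G (by
      intro v
      by_cases hv : v = a.1
      · subst hv; simp; omega
      · simp [hv, h v]) hn.2 (by
      intro p hpl
      have : p.1 ≠ a.1 := hn.1 p hpl
      simpa [this] using hp p (by simp [hpl]))
    rw [Finset.sum_update_of_mem (Finset.mem_univ _)] at h1
    have h2 := Finset.add_sum_erase Finset.univ F (Finset.mem_univ a.1)
    rw [← Finset.sdiff_singleton_eq_erase] at h2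
    simp only [List.map_cons, List.sum_cons]
    omega

lemma dg_le (N : V → Finset V) {S S' : Finset V} (h : S ⊆ S') (v : V) : dg N S' v ≤ dg N S v :=
  Finset.card_le_card (Finset.sdiff_subset_sdiff (Finset.Subset.refl _) h)

lemma ff_le (N : V → Finset V) {b : ℕ → ℕ} (hb : GoodB b) {S S' : Finset V} (h : S ⊆ S') (v : V) :
    ff N b S' v ≤ ff N b S v := by
  unfold ff
  have h1 := hb.mono _ _ (dg_le N h v)
  have h2 := hb.le (dg N S' v)
  by_cases h3 : v ∈ S
  · simp [h3, h h3, h1]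
  · by_cases h4 : v ∈ S'
    · simp [h3, h4]; omega
    · simp [h3, h4]

lemma gainL [Fintype V] (N : V → Finset V) {b : ℕ → ℕ} (hb : GoodB b) (S : Finset V) (x : V)
    (l : List (V × ℕ)) (hn : (l.map Prod.fst).Nodup)
    (hp : ∀ p ∈ l, ff N b (S ∪ N x) p.1 + p.2 ≤ ff N b S p.1) :
    Phi N b (S ∪ N x) + (l.map Prod.snd).sum ≤ Phi N b S :=
  sum_list l _ _ (ff_le N hb Finset.subset_union_left) hn hp

section drops
variable {N : V → Finset V} {S : Finset V} {x v : V}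

lemma dropT (T : Finset V) (hT : ∀ t ∈ T, t ∈ N v ∧ t ∉ S ∧ t ∈ N x) :
    dg N (S ∪ N x) v + T.card ≤ dg N S v := by
  classical
  unfold dg
  rw [← Finset.card_union_of_disjoint]
  · apply Finset.card_le_card
    intro a ha
    rcases Finset.mem_union.1 ha with h | h
    · simp at h ⊢; tauto
    · have := hT a h; simp; tauto
  · rw [Finset.disjoint_left]
    intro a h1 h2
    have := hT a h2
    simp at h1; tauto

lemma drop1 (a : V) (h : a ∈ N v ∧ a ∉ S ∧ a ∈ N x) :
    dg N (S ∪ N x) v + 1 ≤ dg N S v := by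
  simpa using dropT {a} (by simpa using h)

lemma drop2 (a c : V) (hac : a ≠ c) (h : a ∈ N v ∧ a ∉ S ∧ a ∈ N x)
    (h2 : c ∈ N v ∧ c ∉ S ∧ c ∈ N x) :
    dg N (S ∪ N x) v + 2 ≤ dg N S v := by
  have := dropT (N := N) (S := S) (x := x) (v := v) {a, c} (by simp; tauto)
  rwa [Finset.card_pair hac] at this

lemma drop3 (a c e : V) (hac : a ≠ c) (hae : a ≠ e) (hce : c ≠ e) (h : a ∈ N v ∧ a ∉ S ∧ a ∈ N x)
    (h2 : c ∈ N v ∧ c ∉ S ∧ c ∈ N x) (h3 : e ∈ N v ∧ e ∉ S ∧ e ∈ N x) :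
    dg N (S ∪ N x) v + 3 ≤ dg N S v := by
  have := dropT (N := N) (S := S) (x := x) (v := v) {a, c, e} (by simp; tauto)
  rwa [Finset.card_eq_three.2 ⟨a, c, e, hac, hae, hce, rfl⟩] at this

lemma dself : dg N (S ∪ N x) x = 0 := by
  unfold dg
  rw [Finset.card_eq_zero, Finset.sdiff_eq_empty_iff_subset]
  exact Finset.subset_union_right

lemma fself (H : TriN N) {b : ℕ → ℕ} (hb : GoodB b) : ff N b (S ∪ N x) x = 0 := by
  unfold ff
  rw [if_pos (Finset.mem_union_right _ (H.hr x)), dself, hb.zero]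

lemma fwhite {b : ℕ → ℕ} (h : v ∉ S) : ff N b S v = 15 := by simp [ff, h]
lemma fblue {b : ℕ → ℕ} (h : v ∈ S) : ff N b S v = b (dg N S v) := by simp [ff, h]
lemma fblue' {b : ℕ → ℕ} (h : v ∈ S) : ff N b (S ∪ N x) v = b (dg N (S ∪ N x) v) := by simp [ff, h]
lemma fdom {b : ℕ → ℕ} (h : v ∈ N x) : ff N b (S ∪ N x) v = b (dg N (S ∪ N x) v) := by simp [ff, h]

-- white gains
lemma gw0 (h : v ∉ S) (hx : v ∈ N x) (hd : dg N (S ∪ N x) v = 0) :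
    ff N bB (S ∪ N x) v + 15 ≤ ff N bB S v := by
  rw [fwhite h, fdom hx]; have := bB_cases (dg N (S ∪ N x) v); omega
lemma gw1 (h : v ∉ S) (hx : v ∈ N x) (hd : dg N (S ∪ N x) v ≤ 1) :
    ff N bB (S ∪ N x) v + 9 ≤ ff N bB S v := by
  rw [fwhite h, fdom hx]; have := bB_cases (dg N (S ∪ N x) v); omega
lemma gw2 (h : v ∉ S) (hx : v ∈ N x) (hd : dg N (S ∪ N x) v ≤ 2) :
    ff N bB (S ∪ N x) v + 8 ≤ ff N bB S v := by
  rw [fwhite h, fdom hx]; have := bB_cases (dg N (S ∪ N x) v); omega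
lemma gw (h : v ∉ S) (hx : v ∈ N x) {b : ℕ → ℕ} (hb : GoodB b) :
    ff N b (S ∪ N x) v + 6 ≤ ff N b S v := by
  rw [fwhite h, fdom hx]; have := hb.le (dg N (S ∪ N x) v); omega
-- blue gains
lemma gb (h : v ∈ S) (i j k g : ℕ) (hd : dg N (S ∪ N x) v ≤ i) (hd2 : j ≤ dg N S v)
    (hdr : dg N (S ∪ N x) v + k ≤ dg N S v)
    (hg : ∀ m n, m ≤ i → j ≤ n → m + k ≤ n → bB m + g ≤ bB n) :
    ff N bB (S ∪ N x) v + g ≤ ff N bB S v := by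
  rw [fblue h, fblue' h]; exact hg _ _ hd hd2 hdr
lemma gb1 (h : v ∈ S) (hd : dg N S v ≤ 3)
    (hdr : dg N (S ∪ N x) v + 1 ≤ dg N S v) :
    ff N bB (S ∪ N x) v + 1 ≤ ff N bB S v := by
  rw [fblue h, fblue' h]
  have := bB_cases (dg N (S ∪ N x) v); have := bB_cases (dg N S v); omega
lemma gb2 (h : v ∈ S) (hd : dg N S v ≤ 4)
    (hdr : dg N (S ∪ N x) v + 2 ≤ dg N S v) :
    ff N bB (S ∪ N x) v + 2 ≤ ff N bB S v := by
  rw [fblue h, fblue' h]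
  have := bB_cases (dg N (S ∪ N x) v); have := bB_cases (dg N S v); omega
lemma gb23 (h : v ∈ S) (hd : dg N S v ≤ 3)
    (hdr : dg N (S ∪ N x) v + 2 ≤ dg N S v) :
    ff N bB (S ∪ N x) v + 3 ≤ ff N bB S v := by
  rw [fblue h, fblue' h]
  have := bB_cases (dg N (S ∪ N x) v); have := bB_cases (dg N S v); omega
lemma gb22 (h : v ∈ S) (hd : dg N S v ≤ 2)
    (hdr : dg N (S ∪ N x) v + 2 ≤ dg N S v) :
    ff N bB (S ∪ N x) v + 7 ≤ ff N bB S v := by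
  rw [fblue h, fblue' h]
  have := bB_cases (dg N (S ∪ N x) v); have := bB_cases (dg N S v); omega
lemma gb3 (h : v ∈ S) (hd : dg N S v ≤ 4)
    (hdr : dg N (S ∪ N x) v + 3 ≤ dg N S v) :
    ff N bB (S ∪ N x) v + 3 ≤ ff N bB S v := by
  rw [fblue h, fblue' h]
  have := bB_cases (dg N (S ∪ N x) v); have := bB_cases (dg N S v); omega
lemma gb33 (h : v ∈ S) (hd : dg N S v ≤ 3)
    (hdr : dg N (S ∪ N x) v + 3 ≤ dg N S v) :
    ff N bB (S ∪ N x) v + 9 ≤ ff N bB S v := by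
  rw [fblue h, fblue' h]
  have := bB_cases (dg N (S ∪ N x) v); have := bB_cases (dg N S v); omega
-- red gains
lemma gr1 (h : v ∈ S) (hd : 1 ≤ dg N S v) (hdr : dg N (S ∪ N x) v = 0) :
    ff N bB (S ∪ N x) v + 6 ≤ ff N bB S v := by
  rw [fblue h, fblue' h]
  have := bB_cases (dg N (S ∪ N x) v); have := bB_cases (dg N S v); omega
lemma gr2 (h : v ∈ S) (hd : 2 ≤ dg N S v) (hdr : dg N (S ∪ N x) v = 0) :
    ff N bB (S ∪ N x) v + 7 ≤ ff N bB S v := by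
  rw [fblue h, fblue' h]
  have := bB_cases (dg N (S ∪ N x) v); have := bB_cases (dg N S v); omega
lemma gr3 (h : v ∈ S) (hd : 3 ≤ dg N S v) (hdr : dg N (S ∪ N x) v = 0) :
    ff N bB (S ∪ N x) v + 9 ≤ ff N bB S v := by
  rw [fblue h, fblue' h]
  have := bB_cases (dg N (S ∪ N x) v); have := bB_cases (dg N S v); omega

lemma card1 (a : V) (h : a ∈ N v ∧ a ∉ S) : 1 ≤ dg N S v := by
  have : ({a} : Finset V) ⊆ N v \ S := by simpa using h
  exact Finset.card_le_card this
lemma card2 (a c : V) (hac : a ≠ c) (h : a ∈ N v ∧ a ∉ S) (h2 : c ∈ N v ∧ c ∉ S) :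
    2 ≤ dg N S v := by
  have : ({a, c} : Finset V) ⊆ N v \ S := by
    intro z; simp; rintro (rfl | rfl) <;> assumption
  have := Finset.card_le_card this
  rwa [Finset.card_pair hac] at this
lemma card3 (a c e : V) (hac : a ≠ c) (hae : a ≠ e) (hce : c ≠ e) (h : a ∈ N v ∧ a ∉ S)
    (h2 : c ∈ N v ∧ c ∉ S) (h3 : e ∈ N v ∧ e ∉ S) : 3 ≤ dg N S v := by
  have : ({a, c, e} : Finset V) ⊆ N v \ S := by
    intro z; simp; rintro (rfl | rfl | rfl) <;> assumption
  have := Finset.card_le_card this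
  rwa [Finset.card_eq_three.2 ⟨a, c, e, hac, hae, hce, rfl⟩] at this
lemma card4 (a c e f : V) (hac : a ≠ c) (hae : a ≠ e) (hce : c ≠ e) (haf : a ≠ f) (hcf : c ≠ f)
    (hef : e ≠ f) (h : a ∈ N v ∧ a ∉ S)
    (h2 : c ∈ N v ∧ c ∉ S) (h3 : e ∈ N v ∧ e ∉ S) (h4 : f ∈ N v ∧ f ∉ S) : 4 ≤ dg N S v := by
  have : ({a, c, e, f} : Finset V) ⊆ N v \ S := by
    intro z; simp; rintro (rfl | rfl | rfl | rfl) <;> assumption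
  have := Finset.card_le_card this
  rw [Finset.card_insert_of_notMem (by simp [*]),
    Finset.card_eq_three.2 ⟨c, e, f, hce, hcf, hef, rfl⟩] at this
  exact this

/-- another white neighbour -/
lemma exOther (h : 2 ≤ dg N S v) (a : V) : ∃ c, c ∈ N v ∧ c ∉ S ∧ c ≠ a := by
  have : 1 < (N v \ S).card := h
  obtain ⟨c, hc, hca⟩ := Finset.exists_mem_ne this a
  simp at hc
  exact ⟨c, hc.1, hc.2, hca⟩

end drops

section gains
variable [Fintype V] {N : V → Finset V} {b : ℕ → ℕ} {S : Finset V} {x : V}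

lemma gain1 (hb : GoodB b) {a1 : V} {k1 : ℕ}
    (h1 : ff N b (S ∪ N x) a1 + k1 ≤ ff N b S a1)
     :
    Phi N b (S ∪ N x) + (k1) ≤ Phi N b S := by
  have := gainL N hb S x [(a1, k1)] (by simp [*]) (by simp [*])
  simp only [List.map_cons, List.map_nil, List.sum_cons, List.sum_nil] at this
  omega

lemma gain2 (hb : GoodB b) {a1 a2 : V} {k1 k2 : ℕ}
    (h1 : ff N b (S ∪ N x) a1 + k1 ≤ ff N b S a1) (h2 : ff N b (S ∪ N x) a2 + k2 ≤ ff N b S a2)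
    (n12 : a1 ≠ a2) :
    Phi N b (S ∪ N x) + (k1 + k2) ≤ Phi N b S := by
  have := gainL N hb S x [(a1, k1), (a2, k2)] (by simp [*]) (by simp [*])
  simp only [List.map_cons, List.map_nil, List.sum_cons, List.sum_nil] at this
  omega

lemma gain3 (hb : GoodB b) {a1 a2 a3 : V} {k1 k2 k3 : ℕ}
    (h1 : ff N b (S ∪ N x) a1 + k1 ≤ ff N b S a1) (h2 : ff N b (S ∪ N x) a2 + k2 ≤ ff N b S a2) (h3 : ff N b (S ∪ N x) a3 + k3 ≤ ff N b S a3)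
    (n12 : a1 ≠ a2) (n13 : a1 ≠ a3) (n23 : a2 ≠ a3) :
    Phi N b (S ∪ N x) + (k1 + k2 + k3) ≤ Phi N b S := by
  have := gainL N hb S x [(a1, k1), (a2, k2), (a3, k3)] (by simp [*]) (by simp [*])
  simp only [List.map_cons, List.map_nil, List.sum_cons, List.sum_nil] at this
  omega

lemma gain4 (hb : GoodB b) {a1 a2 a3 a4 : V} {k1 k2 k3 k4 : ℕ}
    (h1 : ff N b (S ∪ N x) a1 + k1 ≤ ff N b S a1) (h2 : ff N b (S ∪ N x) a2 + k2 ≤ ff N b S a2) (h3 : ff N b (S ∪ N x) a3 + k3 ≤ ff N b S a3) (h4 : ff N b (S ∪ N x) a4 + k4 ≤ ff N b S a4)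
    (n12 : a1 ≠ a2) (n13 : a1 ≠ a3) (n23 : a2 ≠ a3) (n14 : a1 ≠ a4) (n24 : a2 ≠ a4) (n34 : a3 ≠ a4) :
    Phi N b (S ∪ N x) + (k1 + k2 + k3 + k4) ≤ Phi N b S := by
  have := gainL N hb S x [(a1, k1), (a2, k2), (a3, k3), (a4, k4)] (by simp [*]) (by simp [*])
  simp only [List.map_cons, List.map_nil, List.sum_cons, List.sum_nil] at this
  omega

lemma gain5 (hb : GoodB b) {a1 a2 a3 a4 a5 : V} {k1 k2 k3 k4 k5 : ℕ}
    (h1 : ff N b (S ∪ N x) a1 + k1 ≤ ff N b S a1) (h2 : ff N b (S ∪ N x) a2 + k2 ≤ ff N b S a2) (h3 : ff N b (S ∪ N x) a3 + k3 ≤ ff N b S a3) (h4 : ff N b (S ∪ N x) a4 + k4 ≤ ff N b S a4) (h5 : ff N b (S ∪ N x) a5 + k5 ≤ ff N b S a5)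
    (n12 : a1 ≠ a2) (n13 : a1 ≠ a3) (n23 : a2 ≠ a3) (n14 : a1 ≠ a4) (n24 : a2 ≠ a4) (n34 : a3 ≠ a4) (n15 : a1 ≠ a5) (n25 : a2 ≠ a5) (n35 : a3 ≠ a5) (n45 : a4 ≠ a5) :
    Phi N b (S ∪ N x) + (k1 + k2 + k3 + k4 + k5) ≤ Phi N b S := by
  have := gainL N hb S x [(a1, k1), (a2, k2), (a3, k3), (a4, k4), (a5, k5)] (by simp [*]) (by simp [*])
  simp only [List.map_cons, List.map_nil, List.sum_cons, List.sum_nil] at this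
  omega

lemma gain6 (hb : GoodB b) {a1 a2 a3 a4 a5 a6 : V} {k1 k2 k3 k4 k5 k6 : ℕ}
    (h1 : ff N b (S ∪ N x) a1 + k1 ≤ ff N b S a1) (h2 : ff N b (S ∪ N x) a2 + k2 ≤ ff N b S a2) (h3 : ff N b (S ∪ N x) a3 + k3 ≤ ff N b S a3) (h4 : ff N b (S ∪ N x) a4 + k4 ≤ ff N b S a4) (h5 : ff N b (S ∪ N x) a5 + k5 ≤ ff N b S a5) (h6 : ff N b (S ∪ N x) a6 + k6 ≤ ff N b S a6)
    (n12 : a1 ≠ a2) (n13 : a1 ≠ a3) (n23 : a2 ≠ a3) (n14 : a1 ≠ a4) (n24 : a2 ≠ a4) (n34 : a3 ≠ a4) (n15 : a1 ≠ a5) (n25 : a2 ≠ a5) (n35 : a3 ≠ a5) (n45 : a4 ≠ a5) (n16 : a1 ≠ a6) (n26 : a2 ≠ a6) (n36 : a3 ≠ a6) (n46 : a4 ≠ a6) (n56 : a5 ≠ a6) :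
    Phi N b (S ∪ N x) + (k1 + k2 + k3 + k4 + k5 + k6) ≤ Phi N b S := by
  have := gainL N hb S x [(a1, k1), (a2, k2), (a3, k3), (a4, k4), (a5, k5), (a6, k6)] (by simp [*]) (by simp [*])
  simp only [List.map_cons, List.map_nil, List.sum_cons, List.sum_nil] at this
  omega

end gains

section dgs
variable {N : V → Finset V} {S : Finset V}

lemma dgS (x : V) {k : ℕ} (h : ∀ u, dg N S u ≤ k) : ∀ u, dg N (S ∪ N x) u ≤ k :=
  fun u => (dg_le N Finset.subset_union_left u).trans (h u)

lemma dgW (x : V) {k : ℕ} (h : ∀ u, u ∉ S → dg N S u ≤ k) :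
    ∀ u, u ∉ S ∪ N x → dg N (S ∪ N x) u ≤ k :=
  fun u hu => (dg_le N Finset.subset_union_left u).trans
    (h u fun h => hu (Finset.mem_union_left _ h))

end dgs

section moves
variable [Fintype V] {N : V → Finset V} {S : Finset V}

def Round (N : V → Finset V) (b : ℕ → ℕ) (S : Finset V) : Prop :=
  ∃ x, (∃ t ∈ N x, t ∉ S) ∧ Phi N b (S ∪ N x) + 27 ≤ Phi N b S ∧
    ∀ y, (∃ t ∈ N y, t ∉ S ∪ N x) → Phi N b (S ∪ N x ∪ N y) + 54 ≤ Phi N b S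

lemma mkRound {b : ℕ → ℕ} (x : V) (t : V) (ht : t ∈ N x) (htS : t ∉ S) (g : ℕ) (g' : ℕ)
    (h1 : Phi N b (S ∪ N x) + g ≤ Phi N b S) (hg : 27 ≤ g)
    (h2 : ∀ y, (∃ t ∈ N y, t ∉ S ∪ N x) →
      Phi N b (S ∪ N x ∪ N y) + g' ≤ Phi N b (S ∪ N x)) (hgg : 54 ≤ g + g') :
    Round N b S := by
  refine ⟨x, ⟨t, ht, htS⟩, by omega, fun y hy => ?_⟩
  have := h2 y hy
  omega

/-- Staller bounds -/
lemma stallA (H : TriN N) (y : V) (hy : ∃ t ∈ N y, t ∉ S) :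
    Phi N bA (S ∪ N y) + 15 ≤ Phi N bA S := by
  obtain ⟨t, ht, htS⟩ := hy
  by_cases hyS : y ∈ S
  · have h1 : ff N bA (S ∪ N y) y + 9 ≤ ff N bA S y := by
      rw [fself H goodA, fblue hyS]
      have := bA_cases (dg N S y); have := card1 (v := y) (N := N) (S := S) t ⟨ht, htS⟩; omega
    have h2 := gw htS ht goodA
    exact gain2 goodA h1 h2 (by rintro rfl; exact htS hyS)
  · refine gain1 goodA (a1 := y) ?_
    rw [fself H goodA, fwhite hyS]

lemma stall12 (H : TriN N) (y : V) (hy : ∃ t ∈ N y, t ∉ S) :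
    Phi N bB (S ∪ N y) + 12 ≤ Phi N bB S := by
  obtain ⟨t, ht, htS⟩ := hy
  by_cases hyS : y ∈ S
  · have h1 := gr1 (x := y) hyS (card1 (v := y) (N := N) t ⟨ht, htS⟩) dself
    have h2 := gw htS ht goodB
    exact gain2 goodB h1 h2 (by rintro rfl; exact htS hyS)
  · have := gain1 goodB (gw0 hyS (H.hr y) dself)
    omega

lemma stall14 (H : TriN N) (h3 : ∀ u, u ∉ S → dg N S u ≤ 3) (y : V) (hy : ∃ t ∈ N y, t ∉ S) :
    Phi N bB (S ∪ N y) + 14 ≤ Phi N bB S := by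
  obtain ⟨t, ht, htS⟩ := hy
  by_cases hyS : y ∈ S
  · have h1 := gr1 (x := y) hyS (card1 (v := y) (N := N) t ⟨ht, htS⟩) dself
    have hd := drop1 (N := N) (S := S) (x := y) (v := t) t ⟨H.hr t, htS, ht⟩
    have h2 := gw2 htS ht (by have := h3 t htS; omega)
    exact gain2 goodB h1 h2 (by rintro rfl; exact htS hyS)
  · have := gain1 goodB (gw0 hyS (H.hr y) dself)
    omega

lemma stall16 (H : TriN N) (h3 : ∀ u, dg N S u ≤ 3) (h2 : ∀ u, u ∉ S → dg N S u ≤ 2)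
    (y : V) (hy : ∃ t ∈ N y, t ∉ S) :
    Phi N bB (S ∪ N y) + 16 ≤ Phi N bB S := by
  obtain ⟨t, ht, htS⟩ := hy
  by_cases hyS : y ∈ S
  · have hty : y ≠ t := by rintro rfl; exact htS hyS
    have h1 := gr1 (x := y) hyS (card1 (v := y) (N := N) t ⟨ht, htS⟩) dself
    have hd := drop1 (N := N) (S := S) (x := y) (v := t) t ⟨H.hr t, htS, ht⟩
    have hdt := h2 t htS
    have g2 := gw1 htS ht (by omega)
    by_cases hd1 : dg N S t ≤ 1
    · have g2 := gw0 htS ht (by omega)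
      have := gain2 goodB h1 g2 hty
      omega
    · obtain ⟨t', ht', ht'S, htt'⟩ := exOther (N := N) (S := S) (v := t) (by omega) t
      obtain ⟨w, hw1, hw2, hw3, hw4⟩ := H.ht t' t ht' htt'
      have hwS : w ∈ S := by
        by_contra hwS
        have := card3 (N := N) (S := S) (v := t) t t' w htt'.symm hw4.symm hw3.symm ⟨H.hr t, htS⟩
          ⟨ht', ht'S⟩ ⟨hw2, hwS⟩
        omega
      by_cases hwy : w = y
      · subst hwy
        have g1 := gr2 (x := w) hyS (card2 (v := w) (N := N) t t' htt'.symm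
          ⟨ht, htS⟩ ⟨H.hs _ _ hw1, ht'S⟩) dself
        exact gain2 goodB g1 g2 hty
      · have g3 := gb1 (x := y) hwS (h3 w) (drop1 t ⟨H.hs _ _ hw2, htS, ht⟩)
        exact gain3 goodB h1 g2 g3 hty (Ne.symm hwy) hw4.symm
  · have g1 := gw0 hyS (H.hr y) dself
    have hdy := h2 y hyS
    by_cases hd1 : dg N S y ≤ 1
    · have hnb : ∀ u, u ∈ N y → u ≠ y → u ∈ S := by
        intro u hu huy
        by_contra huS
        have := card2 (N := N) (S := S) (v := y) y u huy.symm ⟨H.hr y, hyS⟩ ⟨hu, huS⟩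
        omega
      obtain ⟨u, hu, huy⟩ := H.hi y
      have g2 := gb1 (x := y) (hnb u hu huy) (h3 u) (drop1 y ⟨H.hs _ _ hu, hyS, H.hr y⟩)
      exact gain2 goodB g1 g2 huy.symm
    · obtain ⟨u, hu, huS, huy⟩ := exOther (N := N) (S := S) (v := y) (by omega) y
      have g2 := gw (N := N) (S := S) (x := y) huS hu goodB
      have := gain2 goodB g1 g2 huy.symm
      omega

/-- Phase A round -/
lemma roundA (H : TriN N) (x : V) (hx : 5 ≤ dg N S x) : Round N bA S := by
  have hne : (N x \ S).Nonempty := by rw [← Finset.card_pos]; unfold dg at hx; omega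
  obtain ⟨t, ht⟩ := hne
  rw [Finset.mem_sdiff] at ht
  refine mkRound x t ht.1 ht.2 39 15 ?_ (by omega) (fun y hy => stallA H y hy) (by omega)
  have key : ∀ l : List V, l.Nodup → (∀ a ∈ l, a ∈ N x ∧ a ∉ S ∧ a ≠ x) →
      ∀ k, ff N bA (S ∪ N x) x + k ≤ ff N bA S x →
      Phi N bA (S ∪ N x) + (k + 6 * l.length) ≤ Phi N bA S := by
    intro l hl hl2 k hk
    have := gainL N goodA S x ((x, k) :: l.map fun a => (a, 6)) (by
      simp only [List.map_cons, List.map_map, List.nodup_cons]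
      have : (Prod.fst ∘ fun a : V => (a, 6)) = id := rfl
      rw [this, List.map_id]
      exact ⟨fun h => (hl2 x h).2.2 rfl, hl⟩) (by
      intro p hp
      rcases List.mem_cons.1 hp with rfl | hp
      · exact hk
      · obtain ⟨a, ha, rfl⟩ := List.mem_map.1 hp
        have := hl2 a ha
        exact gw this.2.1 this.1 goodA)
    have h2 : (List.map Prod.snd ((x, k) :: l.map fun a => (a, 6))).sum = k + 6 * l.length := by
      simp only [List.map_cons, List.map_map, List.sum_cons]
      have : (Prod.snd ∘ fun a : V => (a, 6)) = fun _ => 6 := rfl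
      rw [this, List.map_const', List.sum_replicate]
      simp [mul_comm]
    rwa [h2] at this
  have hlist := key ((N x \ S).erase x).toList (Finset.nodup_toList _) (by
    intro a ha; simp at ha; tauto)
  rw [Finset.length_toList] at hlist
  by_cases hxS : x ∈ S
  · have := hlist 9 (by
      rw [fself H goodA, fblue hxS]; have := bA_cases (dg N S x); omega)
    rw [Finset.erase_eq_of_notMem (by simp [hxS])] at this
    unfold dg at hx; omega
  · have := hlist 15 (by rw [fself H goodA, fwhite hxS])
    rw [Finset.card_erase_of_mem (by simp [hxS, H.hr x])] at this
    unfold dg at hx; omega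

end moves

section memT
variable {N : V → Finset V} {S : Finset V} {v : V}

lemma memT (T : Finset V) (hT : ∀ t ∈ T, t ∈ N v ∧ t ∉ S) (hc : dg N S v ≤ T.card)
    {w : V} (hw : w ∈ N v) (hwS : w ∉ S) : w ∈ T := by
  have h1 : T ⊆ N v \ S := fun t ht => Finset.mem_sdiff.2 (hT t ht)
  rw [Finset.eq_of_subset_of_card_le h1 hc]
  exact Finset.mem_sdiff.2 ⟨hw, hwS⟩

lemma mem2 {a c : V} (hac : a ≠ c) (ha : a ∈ N v) (haS : a ∉ S) (hc : c ∈ N v) (hcS : c ∉ S)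
    (hd : dg N S v ≤ 2) {w : V} (hw : w ∈ N v) (hwS : w ∉ S) : w = a ∨ w = c := by
  have := memT (N := N) (S := S) (v := v) {a, c} (by
    intro z; simp; rintro (rfl | rfl) <;> tauto) (by rwa [Finset.card_pair hac]) hw hwS
  simpa using this

lemma mem3 {a c e : V} (hac : a ≠ c) (hae : a ≠ e) (hce : c ≠ e) (ha : a ∈ N v) (haS : a ∉ S)
    (hc : c ∈ N v) (hcS : c ∉ S) (he : e ∈ N v) (heS : e ∉ S)
    (hd : dg N S v ≤ 3) {w : V} (hw : w ∈ N v) (hwS : w ∉ S) : w = a ∨ w = c ∨ w = e := by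
  have := memT (N := N) (S := S) (v := v) {a, c, e} (by
    intro z; simp; rintro (rfl | rfl | rfl) <;> tauto)
    (by rwa [Finset.card_eq_three.2 ⟨a, c, e, hac, hae, hce, rfl⟩]) hw hwS
  simpa using this

lemma mem4 {a c e f : V} (hac : a ≠ c) (hae : a ≠ e) (hce : c ≠ e) (haf : a ≠ f) (hcf : c ≠ f)
    (hef : e ≠ f) (ha : a ∈ N v) (haS : a ∉ S)
    (hc : c ∈ N v) (hcS : c ∉ S) (he : e ∈ N v) (heS : e ∉ S) (hf : f ∈ N v) (hfS : f ∉ S)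
    (hd : dg N S v ≤ 4) {w : V} (hw : w ∈ N v) (hwS : w ∉ S) :
    w = a ∨ w = c ∨ w = e ∨ w = f := by
  have := memT (N := N) (S := S) (v := v) {a, c, e, f} (by
    intro z; simp; rintro (rfl | rfl | rfl | rfl) <;> tauto)
    (by
      rw [Finset.card_insert_of_notMem (by simp [*]),
        Finset.card_eq_three.2 ⟨c, e, f, hce, hcf, hef, rfl⟩]; exact hd) hw hwS
  simpa using this

end memT

section rounds
variable [Fintype V] {N : V → Finset V} {S : Finset V}

lemma roundB1adj (H : TriN N) (h4 : ∀ u, dg N S u ≤ 4) (p p1 p2 p3 : V)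
    (n1 : p ≠ p1) (n2 : p ≠ p2) (n3 : p ≠ p3) (n12 : p1 ≠ p2) (n13 : p1 ≠ p3) (n23 : p2 ≠ p3)
    (hp : p ∉ S) (h1 : p1 ∈ N p) (h1S : p1 ∉ S) (h2 : p2 ∈ N p) (h2S : p2 ∉ S)
    (h3 : p3 ∈ N p) (h3S : p3 ∉ S) (hadj : p1 ∈ N p2) : Round N bB S := by
  have hpp := H.hr p
  have g0 := gw0 hp hpp dself
  have g1 := gw1 h1S h1 (by
    have := drop3 (N := N) (S := S) (x := p) (v := p1) p p1 p2 n1 n2 n12 ⟨H.hs _ _ h1, hp, hpp⟩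
      ⟨H.hr _, h1S, h1⟩ ⟨H.hs _ _ hadj, h2S, h2⟩
    have := h4 p1; omega)
  have g2 := gw1 h2S h2 (by
    have := drop3 (N := N) (S := S) (x := p) (v := p2) p p1 p2 n1 n2 n12 ⟨H.hs _ _ h2, hp, hpp⟩
      ⟨hadj, h1S, h1⟩ ⟨H.hr _, h2S, h2⟩
    have := h4 p2; omega)
  have d3 := drop2 (N := N) (S := S) (x := p) (v := p3) p p3 n3 ⟨H.hs _ _ h3, hp, hpp⟩
      ⟨H.hr _, h3S, h3⟩
  have h43 := h4 p3
  have fin : ∀ g, 42 ≤ g → Phi N bB (S ∪ N p) + g ≤ Phi N bB S → Round N bB S := fun g hg hP =>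
    mkRound p p hpp hp g 12 hP (by omega) (fun y hy => stall12 H y hy) (by omega)
  by_cases a31 : p1 ∈ N p3
  · have g3 := gw1 h3S h3 (by
      have := drop3 (N := N) (S := S) (x := p) (v := p3) p p1 p3 n1 n3 n13 ⟨H.hs _ _ h3, hp, hpp⟩
        ⟨a31, h1S, h1⟩ ⟨H.hr _, h3S, h3⟩
      omega)
    exact fin _ (by omega) (gain4 goodB g0 g1 g2 g3 n1 n2 n12 n3 n13 n23)
  by_cases a32 : p2 ∈ N p3
  · have g3 := gw1 h3S h3 (by
      have := drop3 (N := N) (S := S) (x := p) (v := p3) p p2 p3 n2 n3 n23 ⟨H.hs _ _ h3, hp, hpp⟩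
        ⟨a32, h2S, h2⟩ ⟨H.hr _, h3S, h3⟩
      omega)
    exact fin _ (by omega) (gain4 goodB g0 g1 g2 g3 n1 n2 n12 n3 n13 n23)
  obtain ⟨w, w1, w2, w3, w4⟩ := H.ht p3 p h3 n3.symm
  have hwS : w ∈ S := by
    by_contra hwS
    rcases mem4 n1 n2 n12 n3 n13 n23 hpp hp h1 h1S h2 h2S h3 h3S (h4 p) w2 hwS
      with rfl | rfl | rfl | rfl <;> tauto
  have g3 := gw2 h3S h3 (by omega)
  have gg := gb2 (x := p) hwS (h4 w) (drop2 p p3 n3 ⟨H.hs _ _ w2, hp, hpp⟩ ⟨H.hs _ _ w1, h3S, h3⟩)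
  have hw : ∀ z, z ∉ S → z ≠ w := fun z hz h => hz (h ▸ hwS)
  exact fin _ (by omega) (gain5 goodB g0 g1 g2 g3 gg n1 n2 n12 n3 n13 n23
    (hw _ hp) (hw _ h1S) (hw _ h2S) (hw _ h3S))

lemma roundB1 (H : TriN N) (h4 : ∀ u, dg N S u ≤ 4) (p : V) (hp : p ∉ S) (hd : 4 ≤ dg N S p) :
    Round N bB S := by
  have hpp := H.hr p
  have hc : 2 < ((N p \ S).erase p).card := by
    rw [Finset.card_erase_of_mem (by simp [hp, hpp])]
    unfold dg at hd; omega
  obtain ⟨p1, p2, p3, m1, m2, m3, n12, n13, n23⟩ := Finset.two_lt_card_iff.1 hc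
  simp only [Finset.mem_erase, Finset.mem_sdiff] at m1 m2 m3
  obtain ⟨n1, h1, h1S⟩ := m1
  obtain ⟨n2, h2, h2S⟩ := m2
  obtain ⟨n3, h3, h3S⟩ := m3
  have n1 := n1.symm
  have n2 := n2.symm
  have n3 := n3.symm
  by_cases a12 : p1 ∈ N p2
  · exact roundB1adj H h4 p p1 p2 p3 n1 n2 n3 n12 n13 n23 hp h1 h1S h2 h2S h3 h3S a12
  by_cases a13 : p1 ∈ N p3
  · exact roundB1adj H h4 p p1 p3 p2 n1 n3 n2 n13 n12 n23.symm hp h1 h1S h3 h3S h2 h2S a13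
  by_cases a23 : p2 ∈ N p3
  · exact roundB1adj H h4 p p2 p3 p1 n2 n3 n1 n23 n12.symm n13.symm hp h2 h2S h3 h3S h1 h1S a23
  have b12 : p2 ∉ N p1 := fun h => a12 (H.hs _ _ h)
  have b13 : p3 ∉ N p1 := fun h => a13 (H.hs _ _ h)
  have b23 : p3 ∉ N p2 := fun h => a23 (H.hs _ _ h)
  have fin : ∀ g, 42 ≤ g → Phi N bB (S ∪ N p) + g ≤ Phi N bB S → Round N bB S := fun g hg hP =>
    mkRound p p hpp hp g 12 hP (by omega) (fun y hy => stall12 H y hy) (by omega)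
  have g0 := gw0 hp hpp dself
  have gi : ∀ q, q ∈ N p → q ∉ S → p ≠ q → ff N bB (S ∪ N p) q + 8 ≤ ff N bB S q := by
    intro q hq hqS hpq
    have d3 := drop2 (N := N) (S := S) (x := p) (v := q) p q hpq ⟨H.hs _ _ hq, hp, hpp⟩
      ⟨H.hr _, hqS, hq⟩
    have h43 := h4 q
    exact gw2 hqS hq (by omega)
  have g1 := gi p1 h1 h1S n1
  have g2 := gi p2 h2 h2S n2
  have g3 := gi p3 h3 h3S n3
  obtain ⟨w, w1, w2, w3, w4⟩ := H.ht p1 p h1 n1.symm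
  have hwS : w ∈ S := by
    by_contra hwS
    rcases mem4 n1 n2 n12 n3 n13 n23 hpp hp h1 h1S h2 h2S h3 h3S (h4 p) w2 hwS
      with rfl | rfl | rfl | rfl <;> tauto
  obtain ⟨z, z1, z2, z3, z4⟩ := H.ht p2 p h2 n2.symm
  have hzS : z ∈ S := by
    by_contra hzS
    rcases mem4 n1 n2 n12 n3 n13 n23 hpp hp h1 h1S h2 h2S h3 h3S (h4 p) z2 hzS
      with rfl | rfl | rfl | rfl <;> tauto
  have hw : ∀ z, z ∉ S → z ≠ w := fun z hz h => hz (h ▸ hwS)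
  have hz : ∀ w, w ∉ S → w ≠ z := fun w hw h => hw (h ▸ hzS)
  by_cases hwz : w = z
  · subst hwz
    have gg := gb3 (x := p) hwS (h4 w) (drop3 p p1 p2 n1 n2 n12 ⟨H.hs _ _ w2, hp, hpp⟩
      ⟨H.hs _ _ w1, h1S, h1⟩ ⟨H.hs _ _ z1, h2S, h2⟩)
    exact fin _ (by omega) (gain5 goodB g0 g1 g2 g3 gg n1 n2 n12 n3 n13 n23
      (hw _ hp) (hw _ h1S) (hw _ h2S) (hw _ h3S))
  · have gg := gb2 (x := p) hwS (h4 w) (drop2 p p1 n1 ⟨H.hs _ _ w2, hp, hpp⟩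
      ⟨H.hs _ _ w1, h1S, h1⟩)
    have gg2 := gb2 (x := p) hzS (h4 z) (drop2 p p2 n2 ⟨H.hs _ _ z2, hp, hpp⟩
      ⟨H.hs _ _ z1, h2S, h2⟩)
    exact fin _ (by omega) (gain6 goodB g0 g1 g2 g3 gg gg2 n1 n2 n12 n3 n13 n23
      (hw _ hp) (hw _ h1S) (hw _ h2S) (hw _ h3S) (hz _ hp) (hz _ h1S) (hz _ h2S) (hz _ h3S) hwz)

lemma roundB2 (H : TriN N) (h3 : ∀ u, u ∉ S → dg N S u ≤ 3) (w : V)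
    (hd : 4 ≤ dg N S w) : Round N bB S := by
  have hwS : w ∈ S := by by_contra h; have := h3 w h; omega
  obtain ⟨T, hT, hTc⟩ := Finset.exists_subset_card_eq hd
  obtain ⟨a, c, e, f, n1, n2, n3, n4, n5, n6, rfl⟩ := Finset.card_eq_four.1 hTc
  have hm : ∀ z, z ∈ ({a, c, e, f} : Finset V) → z ∈ N w ∧ z ∉ S := fun z hz =>
    Finset.mem_sdiff.1 (hT hz)
  obtain ⟨ha, haS⟩ := hm a (by simp)
  obtain ⟨hc, hcS⟩ := hm c (by simp)
  obtain ⟨he, heS⟩ := hm e (by simp)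
  obtain ⟨hf, hfS⟩ := hm f (by simp)
  have gi : ∀ q, q ∈ N w → q ∉ S → ff N bB (S ∪ N w) q + 8 ≤ ff N bB S q := by
    intro q hq hqS
    have d3 := drop1 (N := N) (S := S) (x := w) (v := q) q ⟨H.hr _, hqS, hq⟩
    have h43 := h3 q hqS
    exact gw2 hqS hq (by omega)
  have hw : ∀ z, z ∉ S → w ≠ z := fun z hz h => hz (h ▸ hwS)
  refine mkRound w a ha haS _ 14 (gain5 goodB (gr3 hwS (by omega) dself) (gi a ha haS)
    (gi c hc hcS) (gi e he heS) (gi f hf hfS) (hw _ haS) (hw _ hcS) n1 (hw _ heS) n2 n4 (hw _ hfS)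
    n3 n5 n6) (by omega) (fun y hy => stall14 H (dgW w h3) y hy) (by omega)

/-- C1a -/
lemma roundC1a (H : TriN N) (h3 : ∀ u, dg N S u ≤ 3) (v x y w : V) (hv : v ∉ S) (hx : x ∉ S)
    (hy : y ∉ S) (hvx : v ≠ x) (hvy : v ≠ y) (hxy : x ≠ y) (ax : x ∈ N v) (ay : y ∈ N v)
    (hw : w ∈ S) (wv : v ∈ N w) (wx : x ∈ N w) (wy : y ∈ N w) : Round N bB S := by
  have hvv := H.hr v
  have gi : ∀ q, q ∈ N v → q ∉ S → v ≠ q → ff N bB (S ∪ N v) q + 9 ≤ ff N bB S q := by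
    intro q hq hqS hpq
    have d3 := drop2 (N := N) (S := S) (x := v) (v := q) v q hpq ⟨H.hs _ _ hq, hv, hvv⟩
      ⟨H.hr _, hqS, hq⟩
    have h43 := h3 q
    exact gw1 hqS hq (by omega)
  have gg := gb33 (x := v) hw (h3 w) (drop3 v x y hvx hvy hxy ⟨wv, hv, hvv⟩ ⟨wx, hx, ax⟩
    ⟨wy, hy, ay⟩)
  have hw' : ∀ z, z ∉ S → z ≠ w := fun z hz h => hz (h ▸ hw)
  exact mkRound v v hvv hv _ 12 (gain4 goodB (gw0 hv hvv dself) (gi x ax hx hvx) (gi y ay hy hvy) gg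
    hvx hvy hxy (hw' _ hv) (hw' _ hx) (hw' _ hy)) (by omega) (fun y hy => stall12 H y hy) (by omega)

lemma roundC1 (H : TriN N) (h3 : ∀ u, dg N S u ≤ 3) (v : V) (hv : v ∉ S) (hd : 3 ≤ dg N S v) :
    Round N bB S := by
  by_cases hC : ∃ v x y w : V, v ∉ S ∧ x ∉ S ∧ y ∉ S ∧ v ≠ x ∧ v ≠ y ∧ x ≠ y ∧ x ∈ N v ∧ y ∈ N v ∧
      w ∈ S ∧ v ∈ N w ∧ x ∈ N w ∧ y ∈ N w
  · obtain ⟨v, x, y, w, h⟩ := hC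
    exact roundC1a H h3 v x y w h.1 h.2.1 h.2.2.1 h.2.2.2.1 h.2.2.2.2.1 h.2.2.2.2.2.1
      h.2.2.2.2.2.2.1 h.2.2.2.2.2.2.2.1 h.2.2.2.2.2.2.2.2.1 h.2.2.2.2.2.2.2.2.2.1
      h.2.2.2.2.2.2.2.2.2.2.1 h.2.2.2.2.2.2.2.2.2.2.2
  have hvv := H.hr v
  have hc : 1 < ((N v \ S).erase v).card := by
    rw [Finset.card_erase_of_mem (by simp [hv, hvv])]
    unfold dg at hd; omega
  obtain ⟨x, y, m1, m2, hxy⟩ := Finset.one_lt_card_iff.1 hc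
  simp only [Finset.mem_erase, Finset.mem_sdiff] at m1 m2
  obtain ⟨n1, ax, hx⟩ := m1
  obtain ⟨n2, ay, hy⟩ := m2
  have hvx := n1.symm
  have hvy := n2.symm
  have g0 := gw0 hv hvv dself
  by_cases axy : x ∈ N y
  · have g1 := gw0 hx ax (by
      have := drop3 (N := N) (S := S) (x := v) (v := x) v x y hvx hvy hxy ⟨H.hs _ _ ax, hv, hvv⟩
        ⟨H.hr _, hx, ax⟩ ⟨H.hs _ _ axy, hy, ay⟩
      have := h3 x; omega)
    have g2 := gw0 hy ay (by
      have := drop3 (N := N) (S := S) (x := v) (v := y) v x y hvx hvy hxy ⟨H.hs _ _ ay, hv, hvv⟩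
        ⟨axy, hx, ax⟩ ⟨H.hr _, hy, ay⟩
      have := h3 y; omega)
    exact mkRound v v hvv hv _ 12 (gain3 goodB g0 g1 g2 hvx hvy hxy) (by omega)
      (fun y hy => stall12 H y hy) (by omega)
  have ayx : y ∉ N x := fun h => axy (H.hs _ _ h)
  have gi : ∀ q, q ∈ N v → q ∉ S → v ≠ q → ff N bB (S ∪ N v) q + 9 ≤ ff N bB S q := by
    intro q hq hqS hpq
    have d3 := drop2 (N := N) (S := S) (x := v) (v := q) v q hpq ⟨H.hs _ _ hq, hv, hvv⟩
      ⟨H.hr _, hqS, hq⟩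
    have h43 := h3 q
    exact gw1 hqS hq (by omega)
  have g1 := gi x ax hx hvx
  have g2 := gi y ay hy hvy
  obtain ⟨w, w1, w2, w3, w4⟩ := H.ht x v ax hvx.symm
  have hwS : w ∈ S := by
    by_contra hwS
    rcases mem3 hvx hvy hxy hvv hv ax hx ay hy (h3 v) w2 hwS with rfl | rfl | rfl <;> tauto
  obtain ⟨z, z1, z2, z3, z4⟩ := H.ht y v ay hvy.symm
  have hzS : z ∈ S := by
    by_contra hzS
    rcases mem3 hvx hvy hxy hvv hv ax hx ay hy (h3 v) z2 hzS with rfl | rfl | rfl <;> tauto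
  have hw : ∀ z, z ∉ S → z ≠ w := fun z hz h => hz (h ▸ hwS)
  have hz : ∀ w, w ∉ S → w ≠ z := fun w hw h => hw (h ▸ hzS)
  have hwz : w ≠ z := by
    rintro rfl
    exact hC ⟨v, x, y, w, hv, hx, hy, hvx, hvy, hxy, ax, ay, hwS, H.hs _ _ w2, H.hs _ _ w1,
      H.hs _ _ z1⟩
  have gwv := gb23 (x := v) hwS (h3 w) (drop2 v x hvx ⟨H.hs _ _ w2, hv, hvv⟩
      ⟨H.hs _ _ w1, hx, ax⟩)
  have gzv := gb23 (x := v) hzS (h3 z) (drop2 v y hvy ⟨H.hs _ _ z2, hv, hvv⟩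
      ⟨H.hs _ _ z1, hy, ay⟩)
  have fin : ∀ g, 40 ≤ g → Phi N bB (S ∪ N v) + g ≤ Phi N bB S → Round N bB S := fun g hg hP =>
    mkRound v v hvv hv g 14 hP (by omega)
      (fun y hy => stall14 H (fun u _ => dgS v h3 u) y hy) (by omega)
  by_cases hdx : dg N S x ≤ 2
  · have g1 := gw0 hx ax (by
      have := drop2 (N := N) (S := S) (x := v) (v := x) v x hvx ⟨H.hs _ _ ax, hv, hvv⟩
        ⟨H.hr _, hx, ax⟩
      omega)
    exact fin _ (by omega) (gain5 goodB g0 g1 g2 gwv gzv hvx hvy hxy (hw _ hv) (hw _ hx) (hw _ hy)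
      (hz _ hv) (hz _ hx) (hz _ hy) hwz)
  have hc : 1 < ((N x \ S).erase x).card := by
    rw [Finset.card_erase_of_mem (by simp [hx, H.hr x])]
    unfold dg at hdx; omega
  obtain ⟨x', hx'm, hx'v⟩ := Finset.exists_mem_ne hc v
  simp only [Finset.mem_erase, Finset.mem_sdiff] at hx'm
  obtain ⟨nx', ax', hx'⟩ := hx'm
  obtain ⟨s, s1, s2, s3, s4⟩ := H.ht x' x ax' nx'
  have hx'y : x' ≠ y := by rintro rfl; exact ayx ax'
  have hvx'n : v ∉ N x' := by
    intro h
    rcases mem3 hvx hvy hxy hvv hv ax hx ay hy (h3 v) (H.hs _ _ h) hx' with h | h | h <;> tauto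
  have hsS : s ∈ S := by
    by_contra hsS
    rcases mem3 hvx hx'v.symm nx'.symm (H.hs _ _ ax) hv (H.hr x) hx ax' hx' (h3 x) s2 hsS
      with rfl | rfl | rfl <;> tauto
  have hws : w ≠ s := by
    rintro rfl
    exact hC ⟨x, v, x', w, hx, hv, hx', hvx.symm, nx'.symm, hx'v.symm, H.hs _ _ ax, ax', hwS,
      H.hs _ _ w1, H.hs _ _ w2, H.hs _ _ s1⟩
  have hzs : z ≠ s := by
    rintro rfl
    exact hC ⟨v, x, y, z, hv, hx, hy, hvx, hvy, hxy, ax, ay, hzS, H.hs _ _ z2, H.hs _ _ s2,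
      H.hs _ _ z1⟩
  have hs : ∀ w, w ∉ S → w ≠ s := fun w hw h => hw (h ▸ hsS)
  have gs := gb1 (x := v) hsS (h3 s) (drop1 x ⟨H.hs _ _ s2, hx, ax⟩)
  exact fin _ (by omega) (gain6 goodB g0 g1 g2 gwv gzv gs hvx hvy hxy (hw _ hv) (hw _ hx) (hw _ hy)
      (hz _ hv) (hz _ hx) (hz _ hy) hwz (hs _ hv) (hs _ hx) (hs _ hy) hws hzs)

lemma roundC2 (H : TriN N) (h3 : ∀ u, dg N S u ≤ 3) (h2 : ∀ u, u ∉ S → dg N S u ≤ 2) (w : V)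
    (hd : 3 ≤ dg N S w) : Round N bB S := by
  have hwS : w ∈ S := by by_contra h; have := h2 w h; omega
  obtain ⟨a, c, e, m1, m2, m3, n12, n13, n23⟩ := Finset.two_lt_card_iff.1 hd
  simp only [Finset.mem_sdiff] at m1 m2 m3
  obtain ⟨ha, haS⟩ := m1
  obtain ⟨hc, hcS⟩ := m2
  obtain ⟨he, heS⟩ := m3
  have gi : ∀ q, q ∈ N w → q ∉ S → ff N bB (S ∪ N w) q + 9 ≤ ff N bB S q := by
    intro q hq hqS
    have d3 := drop1 (N := N) (S := S) (x := w) (v := q) q ⟨H.hr _, hqS, hq⟩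
    have h43 := h2 q hqS
    exact gw1 hqS hq (by omega)
  have hw : ∀ z, z ∉ S → w ≠ z := fun z hz h => hz (h ▸ hwS)
  have g0 := gr3 (x := w) hwS hd dself
  have g1 := gi a ha haS
  have g2 := gi c hc hcS
  have g3 := gi e he heS
  have fin : ∀ g, 38 ≤ g → Phi N bB (S ∪ N w) + g ≤ Phi N bB S → Round N bB S := fun g hg hP =>
    mkRound w a ha haS g 16 hP (by omega)
      (fun y hy => stall16 H (dgS w h3) (dgW w h2) y hy) (by omega)
  -- a vertex of N w which becomes red
  by_cases hA : dg N (S ∪ N w) a = 0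
  · have g1 := gw0 haS ha hA
    exact fin _ (by omega) (gain4 goodB g0 g1 g2 g3 (hw _ haS) (hw _ hcS) n12 (hw _ heS) n13 n23)
  by_cases hB : dg N (S ∪ N w) c = 0
  · have g2 := gw0 hcS hc hB
    exact fin _ (by omega) (gain4 goodB g0 g1 g2 g3 (hw _ haS) (hw _ hcS) n12 (hw _ heS) n13 n23)
  have ext : ∀ q, q ∈ N w → q ∉ S → dg N (S ∪ N w) q ≠ 0 → ∃ s, s ∈ S ∧ q ∈ N s ∧ s ≠ w := by
    intro q hq hqS hdq
    have : (N q \ (S ∪ N w)).Nonempty := Finset.card_pos.1 (Nat.pos_of_ne_zero hdq)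
    obtain ⟨q', hq'⟩ := this
    simp only [Finset.mem_sdiff, Finset.mem_union, not_or] at hq'
    obtain ⟨hq'1, hq'S, hq'w⟩ := hq'
    have hqq' : q' ≠ q := by rintro rfl; exact hq'w hq
    obtain ⟨s, s1, s2, s3, s4⟩ := H.ht q' q hq'1 hqq'
    refine ⟨s, ?_, H.hs _ _ s2, ?_⟩
    · by_contra hs
      have := card3 (N := N) (S := S) (v := q) q q' s hqq'.symm s4.symm s3.symm ⟨H.hr q, hqS⟩
        ⟨hq'1, hq'S⟩ ⟨s2, hs⟩
      have := h2 q hqS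
      omega
    · rintro rfl
      exact hq'w (H.hs _ _ s1)
  obtain ⟨s, hsS, hs, hsw⟩ := ext a ha haS hA
  obtain ⟨r, hrS, hr, hrw⟩ := ext c hc hcS hB
  have hs' : ∀ w, w ∉ S → w ≠ s := fun w hw h => hw (h ▸ hsS)
  have hr' : ∀ w, w ∉ S → w ≠ r := fun w hw h => hw (h ▸ hrS)
  by_cases hsr : s = r
  · subst hsr
    have gs := gb23 (x := w) hsS (h3 s) (drop2 a c n12 ⟨hs, haS, ha⟩ ⟨hr, hcS, hc⟩)
    exact fin _ (by omega) (gain5 goodB g0 g1 g2 g3 gs (hw _ haS) (hw _ hcS) n12 (hw _ heS) n13 n23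
      hsw.symm (hs' _ haS) (hs' _ hcS) (hs' _ heS))
  · have gs := gb1 (x := w) hsS (h3 s) (drop1 a ⟨hs, haS, ha⟩)
    have gr := gb1 (x := w) hrS (h3 r) (drop1 c ⟨hr, hcS, hc⟩)
    exact fin _ (by omega) (gain6 goodB g0 g1 g2 g3 gs gr (hw _ haS) (hw _ hcS) n12 (hw _ heS) n13
      n23 hsw.symm (hs' _ haS) (hs' _ hcS) (hs' _ heS) hrw.symm (hr' _ haS) (hr' _ hcS) (hr' _ heS)
      hsr)

/-- pair `u v` of adjacent whites and a blue vertex adjacent to `u` only -/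
lemma roundD1 (H : TriN N) (h2 : ∀ u, dg N S u ≤ 2) (u v x : V) (hu : u ∉ S) (hv : v ∉ S)
    (huv : v ≠ u) (av : v ∈ N u) (hx : x ∈ S) (ax : u ∈ N x) (hxv : v ∉ N x) : Round N bB S := by
  obtain ⟨w, w1, w2, w3, w4⟩ := H.ht v u av huv
  have huu := H.hr u
  have hwS : w ∈ S := by
    by_contra hwS
    rcases mem2 huv.symm huu hu av hv (h2 u) w2 hwS with rfl | rfl <;> tauto
  have g0 := gw0 hu huu dself
  have g1 := gw0 hv av (by
    have := drop2 (N := N) (S := S) (x := u) (v := v) u v huv.symm ⟨H.hs _ _ av, hu, huu⟩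
      ⟨H.hr _, hv, av⟩
    have := h2 v; omega)
  have g2 := gb22 (x := u) hwS (h2 w) (drop2 u v huv.symm ⟨H.hs _ _ w2, hu, huu⟩
    ⟨H.hs _ _ w1, hv, av⟩)
  have g3 := gb1 (x := u) hx ((h2 x).trans (by omega)) (drop1 u ⟨ax, hu, huu⟩)
  have hw : ∀ z, z ∉ S → z ≠ w := fun z hz h => hz (h ▸ hwS)
  have hx' : ∀ z, z ∉ S → z ≠ x := fun z hz h => hz (h ▸ hx)
  have hwx : w ≠ x := by rintro rfl; exact hxv (H.hs _ _ w1)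
  exact mkRound u u huu hu _ 16 (gain4 goodB g0 g1 g2 g3 huv.symm (hw _ hu) (hw _ hv) (hx' _ hu)
    (hx' _ hv) hwx) (by omega)
    (fun y hy => stall16 H (fun u => (dgS _ h2 u).trans (by omega)) (fun a _ => dgS _ h2 a) y hy)
    (by omega)

/-- blue `x` joining two isolated whites -/
lemma roundD2 (H : TriN N) (h2 : ∀ u, dg N S u ≤ 2) (u v x : V) (hu : u ∉ S) (hv : v ∉ S)
    (huv : u ≠ v) (hx : x ∈ S) (ax : u ∈ N x) (hxv : v ∈ N x) (hdu : dg N S u ≤ 1)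
    (hdv : dg N S v ≤ 1) : Round N bB S := by
  have hx' : ∀ z, z ∉ S → x ≠ z := fun z hz h => hz (h ▸ hx)
  obtain ⟨w, w1, w2, w3, w4⟩ := H.ht u x ax (hx' u hu).symm
  have hwS : w ∈ S := by
    by_contra hwS
    have := card2 (N := N) (S := S) (v := u) u w w3.symm ⟨H.hr u, hu⟩ ⟨w1, hwS⟩
    omega
  have gi : ∀ q, q ∈ N x → q ∉ S → dg N S q ≤ 1 → ff N bB (S ∪ N x) q + 15 ≤ ff N bB S q := by
    intro q hq hqS hdq
    have d3 := drop1 (N := N) (S := S) (x := x) (v := q) q ⟨H.hr _, hqS, hq⟩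
    exact gw0 hqS hq (by omega)
  have g0 := gr2 (x := x) hx (card2 (v := x) (N := N) u v huv ⟨ax, hu⟩ ⟨hxv, hv⟩) dself
  have g3 := gb1 (x := x) hwS ((h2 w).trans (by omega)) (drop1 u ⟨H.hs _ _ w1, hu, ax⟩)
  have hw : ∀ z, z ∉ S → z ≠ w := fun z hz h => hz (h ▸ hwS)
  exact mkRound x u ax hu _ 16 (gain4 goodB g0 (gi u ax hu hdu) (gi v hxv hv hdv) g3 (hx' _ hu)
    (hx' _ hv) huv w4.symm (hw _ hu) (hw _ hv)) (by omega)
    (fun y hy => stall16 H (fun u => (dgS _ h2 u).trans (by omega)) (fun a _ => dgS _ h2 a) y hy)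
    (by omega)

lemma stall27 (H : TriN N) (hQ : ∀ t, t ∉ S → ∀ y ∈ N t, N y \ S = N t \ S)
    (y : V) (hy : ∃ t ∈ N y, t ∉ S) : Phi N bB (S ∪ N y) + 27 ≤ Phi N bB S := by
  obtain ⟨t, hty, htS⟩ := hy
  have hyt := H.hs _ _ hty
  have gi : ∀ q, q ∈ N t → ff N bB (S ∪ N y) q + 6 ≤ ff N bB S q := by
    intro q hq
    by_cases hqS : q ∈ S
    · refine gr1 hqS (card1 t ⟨H.hs _ _ hq, htS⟩) ?_
      have h1 := hQ t htS q hq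
      have h2 := hQ t htS y hyt
      unfold dg
      rw [Finset.card_eq_zero, Finset.sdiff_eq_empty_iff_subset]
      intro z hz
      by_cases hzS : z ∈ S
      · simp [hzS]
      · have : z ∈ N y \ S := by rw [h2, ← h1]; simp [hz, hzS]
        simp at this; simp [this]
    · refine gw hqS ?_ goodB
      have : q ∈ N y \ S := by rw [hQ t htS y hyt]; simp [hq, hqS]
      simp at this; exact this.1
  have g0 := gw0 (x := y) htS hty (by
    have h2 := hQ t htS y hyt
    unfold dg
    rw [Finset.card_eq_zero, Finset.sdiff_eq_empty_iff_subset]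
    intro z hz
    by_cases hzS : z ∈ S
    · simp [hzS]
    · have : z ∈ N y \ S := by rw [h2]; simp [hz, hzS]
      simp at this; simp [this])
  obtain ⟨u, hu, hut⟩ := H.hi t
  obtain ⟨w, w1, w2, w3, w4⟩ := H.ht u t hu hut
  exact gain3 goodB g0 (gi u hu) (gi w w2) hut.symm w4.symm w3.symm

lemma roundD (H : TriN N) (h2 : ∀ u, dg N S u ≤ 2) (t0 : V) (ht0 : t0 ∉ S) : Round N bB S := by
  by_cases hQ : ∀ t, t ∉ S → ∀ y ∈ N t, N y \ S = N t \ S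
  · refine mkRound t0 t0 (H.hr _) ht0 27 27 (stall27 H hQ t0 ⟨t0, H.hr _, ht0⟩) (by omega)
      (fun y hy => stall27 H ?_ y hy) (by omega)
    intro t ht y hy
    have h := hQ t (fun h => ht (Finset.mem_union_left _ h)) y hy
    ext z
    have hz := congrArg (fun A => z ∈ A) h
    simp only [Finset.mem_sdiff, eq_iff_iff] at hz
    simp only [Finset.mem_sdiff, Finset.mem_union]
    tauto
  · push Not at hQ
    obtain ⟨t, htS, y, hyt, hne⟩ := hQ
    have hty := H.hs _ _ hyt
    have heq2 : ∀ a c, a ≠ c → a ∈ N y → a ∉ S → c ∈ N y → c ∉ S → a ∈ N t → c ∈ N t → False := by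
      intro a c hac ha haS hc hcS hat hct
      apply hne
      ext z
      simp only [Finset.mem_sdiff]
      constructor
      · rintro ⟨h, hz⟩
        rcases mem2 hac ha haS hc hcS (h2 y) h hz with rfl | rfl <;> exact ⟨by assumption, hz⟩
      · rintro ⟨h, hz⟩
        rcases mem2 hac hat haS hct hcS (h2 t) h hz with rfl | rfl <;> exact ⟨by assumption, hz⟩
    have hyS : y ∈ S := by
      by_contra hyS
      have : t ≠ y := by rintro rfl; exact hne rfl
      exact heq2 t y this hty htS (H.hr y) hyS (H.hr t) hyt
    by_cases hd : 2 ≤ dg N S t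
    · obtain ⟨v, hv, hvS, hvt⟩ := exOther hd t
      exact roundD1 H h2 t v y htS hvS hvt hv hyS hty
        (fun h => heq2 t v hvt.symm hty htS h hvS (H.hr t) hv)
    · have hu : ∃ u, u ∈ N y ∧ u ∉ S ∧ u ≠ t := by
        by_contra hcon
        push Not at hcon
        apply hne
        have e1 : ∀ z, z ∈ N t \ S ↔ z = t := by
          intro z
          simp only [Finset.mem_sdiff]
          constructor
          · rintro ⟨h, hz⟩
            by_contra hzt
            have := card2 (N := N) (S := S) (v := t) t z (Ne.symm hzt) ⟨H.hr t, htS⟩ ⟨h, hz⟩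
            omega
          · rintro rfl; exact ⟨H.hr _, htS⟩
        ext z
        rw [e1]
        simp only [Finset.mem_sdiff]
        constructor
        · rintro ⟨h, hz⟩; exact hcon z h hz
        · rintro rfl; exact ⟨hty, htS⟩
      obtain ⟨u, huy, huS, hut⟩ := hu
      by_cases hdu : 2 ≤ dg N S u
      · obtain ⟨v, hv, hvS, hvu⟩ := exOther hdu u
        refine roundD1 H h2 u v y huS hvS hvu hv hyS huy (fun h => ?_)
        rcases mem2 hut huy huS hty htS (h2 y) h hvS with rfl | rfl
        · exact hvu rfl
        · have := card2 (N := N) (S := S) (v := v) v u hvu ⟨H.hr v, hvS⟩ ⟨H.hs _ _ hv, huS⟩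
          omega
      · exact roundD2 H h2 t u y htS huS hut.symm hyS hty huy (by omega) (by omega)

lemma roundB (H : TriN N) (h4 : ∀ u, dg N S u ≤ 4) (t : V) (ht : t ∉ S) : Round N bB S := by
  by_cases c1 : ∃ p, p ∉ S ∧ 4 ≤ dg N S p
  · obtain ⟨p, hp, hd⟩ := c1; exact roundB1 H h4 p hp hd
  push Not at c1
  by_cases c2 : ∃ p, 4 ≤ dg N S p
  · obtain ⟨p, hd⟩ := c2; exact roundB2 H (fun u hu => by have := c1 u hu; omega) p hd
  push Not at c2
  have h3 : ∀ u, dg N S u ≤ 3 := fun u => by have := c2 u; omega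
  by_cases c3 : ∃ p, p ∉ S ∧ 3 ≤ dg N S p
  · obtain ⟨p, hp, hd⟩ := c3; exact roundC1 H h3 p hp hd
  push Not at c3
  by_cases c4 : ∃ p, 3 ≤ dg N S p
  · obtain ⟨p, hd⟩ := c4; exact roundC2 H h3 (fun u hu => by have := c3 u hu; omega) p hd
  push Not at c4
  exact roundD H (fun u => by have := c4 u; omega) t ht

end rounds

section game
variable [Fintype V]

lemma val_dom (H : Finset (Finset V)) (S : Finset V) (x : V) (hx : ∃ t ∈ closedNbhd H x, t ∉ S) :
    domGameVal H true S ≤ 1 + domGameVal H false (S ∪ closedNbhd H x) := by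
  have hx' : ¬ closedNbhd H x ⊆ S := Finset.not_subset.2 hx
  have hm : x ∈ Finset.univ.filter fun v => ¬ closedNbhd H v ⊆ S := by simp [hx']
  rw [domGameVal, dif_pos ⟨x, hm⟩, if_pos rfl]
  apply Nat.add_le_add_left
  exact Finset.inf'_le (fun v : {v // v ∈ Finset.univ.filter fun v => ¬ closedNbhd H v ⊆ S} =>
    domGameVal H false (S ∪ closedNbhd H v.1)) (Finset.mem_attach _ ⟨x, hm⟩)

lemma val_stall (H : Finset (Finset V)) (S : Finset V) (K : ℕ)
    (h : ∀ y, (∃ t ∈ closedNbhd H y, t ∉ S) →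
      27 * (1 + domGameVal H true (S ∪ closedNbhd H y)) ≤ K) :
    27 * domGameVal H false S ≤ K := by
  rw [domGameVal]
  split_ifs with h1 h2
  · exact absurd h2 (by simp)
  · obtain ⟨y, hy, hy2⟩ := Finset.exists_mem_eq_sup' (Finset.attach_nonempty_iff.mpr h1)
      (fun v : {v // v ∈ Finset.univ.filter fun v => ¬ closedNbhd H v ⊆ S} =>
        domGameVal H true (S ∪ closedNbhd H v.1))
    rw [hy2]
    exact h y.1 (Finset.not_subset.1 (Finset.mem_filter.1 y.2).2)
  · omega

lemma val_univ (H : Finset (Finset V)) (S : Finset V) (h : ∀ t, t ∈ S) (d : Bool) :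
    domGameVal H d S = 0 := by
  rw [domGameVal, dif_neg]
  rintro ⟨x, hx⟩
  simp only [Finset.mem_filter] at hx
  exact hx.2 fun t _ => h t

lemma val_round (H : Finset (Finset V)) (b : ℕ → ℕ) (S : Finset V)
    (hR : Round (closedNbhd H) b S)
    (ih : ∀ S', S ⊂ S' → 27 * domGameVal H true S' ≤ Phi (closedNbhd H) b S') :
    27 * domGameVal H true S ≤ Phi (closedNbhd H) b S := by
  obtain ⟨x, hx, h1, h2⟩ := hR
  have a1 := val_dom H S x hx
  have a2 := val_stall H (S ∪ closedNbhd H x) (Phi (closedNbhd H) b S - 27) (by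
    intro y hy
    have b1 := h2 y hy
    have b2 := ih (S ∪ closedNbhd H x ∪ closedNbhd H y) (by
      rw [Finset.ssubset_iff_of_subset
        (Finset.subset_union_left.trans Finset.subset_union_left)]
      obtain ⟨t, ht, htS⟩ := hx
      exact ⟨t, by simp [ht], htS⟩)
    omega)
  omega

lemma valB (H : Finset (Finset V)) (hT : TriN (closedNbhd H)) (n : ℕ) : ∀ S : Finset V,
    Fintype.card V - S.card ≤ n → (∀ u, dg (closedNbhd H) S u ≤ 4) →
    27 * domGameVal H true S ≤ Phi (closedNbhd H) bB S := by
  induction n with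
  | zero =>
    intro S hS _
    have : S = Finset.univ := Finset.eq_univ_of_card S (by have := Finset.card_le_univ S; omega)
    rw [val_univ H S (by simp [this])]; omega
  | succ n ih =>
    intro S hS h4
    by_cases hu : ∀ t, t ∈ S
    · rw [val_univ H S hu]; omega
    push Not at hu
    obtain ⟨t, ht⟩ := hu
    refine val_round H bB S (roundB hT h4 t ht) fun S' hS' => ih S' ?_ fun u =>
      (dg_le _ hS'.1 u).trans (h4 u)
    have := Finset.card_lt_card hS'; omega

lemma valA (H : Finset (Finset V)) (hT : TriN (closedNbhd H)) (n : ℕ) : ∀ S : Finset V,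
    Fintype.card V - S.card ≤ n →
    27 * domGameVal H true S ≤ Phi (closedNbhd H) bA S := by
  induction n with
  | zero =>
    intro S hS
    have : S = Finset.univ := Finset.eq_univ_of_card S (by have := Finset.card_le_univ S; omega)
    rw [val_univ H S (by simp [this])]; omega
  | succ n ih =>
    intro S hS
    by_cases h5 : ∃ x, 5 ≤ dg (closedNbhd H) S x
    · obtain ⟨x, hx⟩ := h5
      refine val_round H bA S (roundA hT x hx) fun S' hS' => ih S' ?_
      have := Finset.card_lt_card hS'; omega
    · push Not at h5
      refine (valB H hT _ S le_rfl fun u => by have := h5 u; omega).trans ?_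
      apply Finset.sum_le_sum
      intro v _
      unfold ff
      split_ifs
      · have := bA_cases (dg (closedNbhd H) S v); have := bB_cases (dg (closedNbhd H) S v); omega
      · exact le_rfl

lemma triN_closedNbhd (H : Finset (Finset V))
    (hisol : ∀ v : V, ∃ u : V, u ≠ v ∧ ∃ e ∈ H, u ∈ e ∧ v ∈ e)
    (hedge : ∀ e ∈ H, 3 ≤ e.card) : TriN (closedNbhd H) := by
  have hm : ∀ u v, u ∈ closedNbhd H v ↔ (u = v ∨ ∃ e ∈ H, u ∈ e ∧ v ∈ e) := by
    intro u v; simp [closedNbhd]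
  refine ⟨fun v => (hm _ _).2 (Or.inl rfl), fun u v h => ?_, fun u v h huv => ?_, fun v => ?_⟩
  · rw [hm] at h ⊢
    rcases h with h | ⟨e, he, h1, h2⟩
    · exact Or.inl h.symm
    · exact Or.inr ⟨e, he, h2, h1⟩
  · rw [hm] at h
    rcases h with h | ⟨e, he, h1, h2⟩
    · exact absurd h huv
    · have hlt : ({u, v} : Finset V).card < e.card := by
        rw [Finset.card_pair huv]; have := hedge e he; omega
      obtain ⟨w, hw, hw2⟩ := Finset.exists_mem_notMem_of_card_lt_card hlt
      simp only [Finset.mem_insert, Finset.mem_singleton, not_or] at hw2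
      exact ⟨w, (hm _ _).2 (Or.inr ⟨e, he, hw, h1⟩), (hm _ _).2 (Or.inr ⟨e, he, hw, h2⟩), hw2.1, hw2.2⟩
  · obtain ⟨u, huv, e, he, h1, h2⟩ := hisol v
    exact ⟨u, (hm _ _).2 (Or.inr ⟨e, he, h1, h2⟩), huv⟩

end game

/-- if `H` is a hypergraph on `n` vertices with no isolated vertices in
which every edge has at least three vertices, then `γ_g(H) ≤ (5/9) n`. -/
theorem stmt_15 (V : Type) [Fintype V] (H : Finset (Finset V))
    (hisol : ∀ v : V, ∃ u : V, u ≠ v ∧ ∃ e ∈ H, u ∈ e ∧ v ∈ e)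
    (hedge : ∀ e ∈ H, 3 ≤ e.card) :
    (gammaGame H : ℝ) ≤ 5 / 9 * Fintype.card V := by
  have h := valA H (triN_closedNbhd H hisol hedge) _ ∅ le_rfl
  have h2 : Phi (closedNbhd H) bA ∅ = Fintype.card V * 15 := by
    simp [Phi, ff]
  rw [h2] at h
  have h3 : (27 : ℝ) * (gammaGame H : ℝ) ≤ (Fintype.card V : ℝ) * 15 := by
    unfold gammaGame
    exact_mod_cast h
  linarith
end

section
/- If H is a 5-uniform hypergraph on n vertices with no isolated vertices, then γ_g(H) ≤ (37/72)·n. -/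
attribute [local instance 10] Classical.propDecidable

variable {V : Type}

/-- number of undominated vertices -/
noncomputable def whiteCnt [Fintype V] (S : Finset V) : ℕ :=
  (Finset.univ.filter fun v : V => v ∉ S).card

/-- number of legal moves -/
noncomputable def liveCnt [Fintype V] (H : Finset (Finset V)) (S : Finset V) : ℕ :=
  (Finset.univ.filter fun v => ¬ closedNbhd H v ⊆ S).card

lemma mem_cn [Fintype V] {H : Finset (Finset V)} {u v : V} :
    u ∈ closedNbhd H v ↔ (u = v ∨ ∃ e ∈ H, u ∈ e ∧ v ∈ e) := by
  simp [closedNbhd]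

lemma cn_self [Fintype V] (H : Finset (Finset V)) (v : V) : v ∈ closedNbhd H v :=
  mem_cn.2 (Or.inl rfl)

lemma cn_symm [Fintype V] {H : Finset (Finset V)} {u v : V} (h : u ∈ closedNbhd H v) :
    v ∈ closedNbhd H u := by
  rw [mem_cn] at *
  rcases h with h | ⟨e, he, h1, h2⟩
  · exact Or.inl h.symm
  · exact Or.inr ⟨e, he, h2, h1⟩

lemma val_zero [Fintype V] (H : Finset (Finset V)) (d : Bool) (S : Finset V)
    (h : ∀ v, closedNbhd H v ⊆ S) : domGameVal H d S = 0 := by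
  rw [domGameVal, dif_neg]
  rintro ⟨v, hv⟩
  exact (Finset.mem_filter.mp hv).2 (h v)

lemma val_true_le [Fintype V] (H : Finset (Finset V)) (S : Finset V) (v : V)
    (hv : ¬ closedNbhd H v ⊆ S) :
    domGameVal H true S ≤ 1 + domGameVal H false (S ∪ closedNbhd H v) := by
  have hm : v ∈ (Finset.univ.filter fun v => ¬ closedNbhd H v ⊆ S) := by simp [hv]
  rw [domGameVal, dif_pos ⟨v, hm⟩, if_pos rfl]
  refine Nat.add_le_add_left ?_ 1
  exact Finset.inf'_le (fun w : {x // x ∈ (Finset.univ.filter fun v => ¬ closedNbhd H v ⊆ S)} =>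
    domGameVal H false (S ∪ closedNbhd H w.1)) (Finset.mem_attach _ ⟨v, hm⟩)

lemma val_false_le [Fintype V] (H : Finset (Finset V)) (S : Finset V) (c : ℝ) (hc : 0 ≤ c)
    (h : ∀ v, ¬ closedNbhd H v ⊆ S →
      1 + (domGameVal H true (S ∪ closedNbhd H v) : ℝ) ≤ c) :
    (domGameVal H false S : ℝ) ≤ c := by
  by_cases hn : (Finset.univ.filter fun v => ¬ closedNbhd H v ⊆ S).Nonempty
  · rw [domGameVal, dif_pos hn, if_neg (by simp)]
    obtain ⟨w, -, hw⟩ := Finset.exists_mem_eq_sup' (Finset.attach_nonempty_iff.mpr hn)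
      (fun w : {x // x ∈ (Finset.univ.filter fun v => ¬ closedNbhd H v ⊆ S)} =>
        domGameVal H true (S ∪ closedNbhd H w.1))
    rw [hw]
    push_cast
    exact h w.1 (Finset.mem_filter.mp w.2).2
  · rw [domGameVal, dif_neg hn]
    simpa using hc

lemma white_drop [Fintype V] (H : Finset (Finset V)) (S : Finset V) (v : V) :
    whiteCnt (S ∪ closedNbhd H v) + (closedNbhd H v \ S).card = whiteCnt S := by
  unfold whiteCnt
  rw [← Finset.card_union_of_disjoint]
  · congr 1
    ext x
    simp
    tauto
  · rw [Finset.disjoint_left]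
    intro x
    simp
    tauto

lemma live_drop [Fintype V] (H : Finset (Finset V)) (S : Finset V) (v : V) (R : Finset V)
    (h1 : ∀ x ∈ R, ¬ closedNbhd H x ⊆ S) (h2 : ∀ x ∈ R, closedNbhd H x ⊆ S ∪ closedNbhd H v) :
    liveCnt H (S ∪ closedNbhd H v) + R.card ≤ liveCnt H S := by
  unfold liveCnt
  rw [← Finset.card_union_of_disjoint]
  · apply Finset.card_le_card
    intro x hx
    simp only [Finset.mem_union, Finset.mem_filter, Finset.mem_univ, true_and] at hx ⊢
    rcases hx with hx | hx
    · exact fun h => hx (h.trans Finset.subset_union_left)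
    · exact h1 x hx
  · rw [Finset.disjoint_left]
    intro x hx hR
    exact (Finset.mem_filter.mp hx).2 (h2 x hR)

lemma live_drop_one [Fintype V] (H : Finset (Finset V)) (S : Finset V) (v : V)
    (h : ¬ closedNbhd H v ⊆ S) :
    liveCnt H (S ∪ closedNbhd H v) + 1 ≤ liveCnt H S := by
  have := live_drop H S v {v} (by simpa using h) (by simp)
  simpa using this

lemma new_pos [Fintype V] {H : Finset (Finset V)} {S : Finset V} {v : V} :
    ¬ closedNbhd H v ⊆ S ↔ 1 ≤ (closedNbhd H v \ S).card := by
  rw [Nat.one_le_iff_ne_zero, Ne, Finset.card_eq_zero, Finset.sdiff_eq_empty_iff_subset]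

lemma game_step [Fintype V] (H : Finset (Finset V)) (a b : ℝ) (ha : 0 ≤ a) (hb : 0 ≤ b)
    (S : Finset V) (v : V) (w u : ℕ) (hw1 : 1 ≤ w) (hw : w ≤ (closedNbhd H v \ S).card)
    (hu : liveCnt H (S ∪ closedNbhd H v) + u ≤ liveCnt H S)
    (hab : 2 ≤ (w + 1) * a + (u + 1) * b) (h1 : 1 ≤ w * a + u * b)
    (IH : ∀ T, S ⊆ T → whiteCnt T < whiteCnt S →
      (domGameVal H true T : ℝ) ≤ a * whiteCnt T + b * liveCnt H T) :
    (domGameVal H true S : ℝ) ≤ a * whiteCnt S + b * liveCnt H S := by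
  have hv : ¬ closedNbhd H v ⊆ S := new_pos.2 (hw1.trans hw)
  have hwd := white_drop H S v
  have e1 : (domGameVal H true S : ℝ) ≤ 1 + domGameVal H false (S ∪ closedNbhd H v) := by
    exact_mod_cast val_true_le H S v hv
  set T := S ∪ closedNbhd H v with hT
  have c1 : (whiteCnt T : ℝ) + w ≤ whiteCnt S := by
    have : whiteCnt T + w ≤ whiteCnt S := by omega
    exact_mod_cast this
  have c2 : (liveCnt H T : ℝ) + u ≤ liveCnt H S := by exact_mod_cast hu
  have p1 := mul_le_mul_of_nonneg_left c1 ha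
  have p2 := mul_le_mul_of_nonneg_left c2 hb
  have q1 : 0 ≤ a * whiteCnt T := by positivity
  have q2 : 0 ≤ b * liveCnt H T := by positivity
  have e2 : (domGameVal H false T : ℝ) ≤ a * whiteCnt S + b * liveCnt H S - 1 := by
    apply val_false_le
    · linarith
    · intro x hx
      have d1 := white_drop H T x
      have d2 := live_drop_one H T x hx
      have d3 := new_pos.1 hx
      have i := IH (T ∪ closedNbhd H x)
        (Finset.subset_union_left.trans Finset.subset_union_left) (by omega)
      have c3 : (whiteCnt (T ∪ closedNbhd H x) : ℝ) + 1 ≤ whiteCnt T := by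
        have : whiteCnt (T ∪ closedNbhd H x) + 1 ≤ whiteCnt T := by omega
        exact_mod_cast this
      have c4 : (liveCnt H (T ∪ closedNbhd H x) : ℝ) + 1 ≤ liveCnt H T := by
        exact_mod_cast d2
      have p3 := mul_le_mul_of_nonneg_left c3 ha
      have p4 := mul_le_mul_of_nonneg_left c4 hb
      linarith
  linarith

lemma live_count [Fintype V] (H : Finset (Finset V)) (h5 : ∀ v, 5 ≤ (closedNbhd H v).card)
    (S : Finset V) (k : ℕ) (hk : ∀ v, (closedNbhd H v \ S).card ≤ k) :
    whiteCnt S * 5 ≤ liveCnt H S * k := by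
  unfold whiteCnt liveCnt
  apply Finset.card_mul_le_card_mul (fun x v => x ∈ closedNbhd H v)
  · intro x hx
    refine (h5 x).trans (Finset.card_le_card ?_)
    intro y hy
    rw [Finset.mem_bipartiteAbove]
    refine ⟨?_, cn_symm hy⟩
    simp only [Finset.mem_filter, Finset.mem_univ, true_and] at hx ⊢
    exact fun h => hx (h (cn_symm hy))
  · intro v _
    refine le_trans (Finset.card_le_card ?_) (hk v)
    intro y hy
    rw [Finset.mem_bipartiteBelow] at hy
    simp only [Finset.mem_filter, Finset.mem_univ, true_and] at hy
    exact Finset.mem_sdiff.2 ⟨hy.2, hy.1⟩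

lemma two_red [Fintype V] (H : Finset (Finset V)) (S : Finset V)
    (hk : ∀ v, (closedNbhd H v \ S).card ≤ 2) (hex : ∃ v, 2 ≤ (closedNbhd H v \ S).card) :
    ∃ v, 2 ≤ (closedNbhd H v \ S).card ∧
      liveCnt H (S ∪ closedNbhd H v) + 2 ≤ liveCnt H S := by
  have key : ∀ v x, 2 ≤ (closedNbhd H v \ S).card → x ≠ v → x ∉ S →
      closedNbhd H x ⊆ S ∪ closedNbhd H v →
      liveCnt H (S ∪ closedNbhd H v) + 2 ≤ liveCnt H S := by
    intro v x hv hxv hxS hsub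
    have := live_drop H S v {v, x} ?_ ?_
    · rwa [Finset.card_pair hxv.symm] at this
    · intro y hy
      rcases Finset.mem_insert.1 hy with rfl | hy
      · exact new_pos.2 (by omega)
      · rw [Finset.mem_singleton.1 hy]
        exact fun h => hxS (h (cn_self H x))
    · intro y hy
      rcases Finset.mem_insert.1 hy with rfl | hy
      · exact Finset.subset_union_right
      · rwa [Finset.mem_singleton.1 hy]
  by_cases hc : ∃ v, v ∉ S ∧ 2 ≤ (closedNbhd H v \ S).card
  · obtain ⟨v, hvS, hv⟩ := hc
    refine ⟨v, hv, ?_⟩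
    obtain ⟨x, hx, hxv⟩ := Finset.exists_mem_ne (by omega : 1 < (closedNbhd H v \ S).card) v
    rw [Finset.mem_sdiff] at hx
    refine key v x hv hxv hx.2 ?_
    have hpair : ({v, x} : Finset V) = closedNbhd H x \ S := by
      apply Finset.eq_of_subset_of_card_le
      · intro y hy
        rcases Finset.mem_insert.1 hy with rfl | hy
        · exact Finset.mem_sdiff.2 ⟨cn_symm hx.1, hvS⟩
        · rw [Finset.mem_singleton.1 hy]
          exact Finset.mem_sdiff.2 ⟨cn_self H x, hx.2⟩
      · rw [Finset.card_pair hxv.symm]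
        exact hk x
    intro y hy
    by_cases hyS : y ∈ S
    · exact Finset.mem_union_left _ hyS
    · have : y ∈ ({v, x} : Finset V) := by
        rw [hpair]; exact Finset.mem_sdiff.2 ⟨hy, hyS⟩
      apply Finset.mem_union_right
      rcases Finset.mem_insert.1 this with rfl | h
      · exact cn_self H _
      · rw [Finset.mem_singleton.1 h]; exact hx.1
  · push Not at hc
    obtain ⟨v, hv⟩ := hex
    refine ⟨v, hv, ?_⟩
    obtain ⟨x, hx, hxv⟩ := Finset.exists_mem_ne (by omega : 1 < (closedNbhd H v \ S).card) v
    rw [Finset.mem_sdiff] at hx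
    refine key v x hv hxv hx.2 ?_
    intro y hy
    by_cases hyS : y ∈ S
    · exact Finset.mem_union_left _ hyS
    · have h1 := hc x hx.2
      have : y = x := Finset.card_le_one.1 (by omega : (closedNbhd H x \ S).card ≤ 1) y
        (Finset.mem_sdiff.2 ⟨hy, hyS⟩) x (Finset.mem_sdiff.2 ⟨cn_self H x, hx.2⟩)
      rw [this]
      exact Finset.mem_union_right _ hx.1

/-- every vertex has at most `k` undominated vertices in its closed neighborhood -/
def MaxNew [Fintype V] (H : Finset (Finset V)) (k : ℕ) (S : Finset V) : Prop :=
  ∀ v, (closedNbhd H v \ S).card ≤ k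

lemma MaxNew.mono [Fintype V] {H : Finset (Finset V)} {k : ℕ} {S T : Finset V}
    (h : MaxNew H k S) (hST : S ⊆ T) : MaxNew H k T := fun v =>
  (Finset.card_le_card (Finset.sdiff_subset_sdiff (Finset.Subset.refl _) hST)).trans (h v)

lemma maxNew_or [Fintype V] (H : Finset (Finset V)) (k : ℕ) (S : Finset V) :
    MaxNew H k S ∨ ∃ v, k + 1 ≤ (closedNbhd H v \ S).card := by
  by_cases h : MaxNew H k S
  · exact Or.inl h
  · unfold MaxNew at h
    push Not at h
    exact Or.inr h

section
variable [Fintype V] (H : Finset (Finset V)) (h5 : ∀ v, 5 ≤ (closedNbhd H v).card)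

lemma phase1 : ∀ (m : ℕ) (S : Finset V), whiteCnt S = m → MaxNew H 1 S →
    (domGameVal H true S : ℝ) ≤ 1 * whiteCnt S + 0 * liveCnt H S := by
  intro m
  induction m using Nat.strong_induction_on with
  | _ m ih =>
    intro S hS hM
    rcases maxNew_or H 0 S with h | ⟨v, hv⟩
    · rw [val_zero H true S]
      · push_cast; positivity
      · intro v
        by_contra hc
        have := new_pos.1 hc
        have := h v
        omega
    · exact game_step H 1 0 (by norm_num) (by norm_num) S v 1 1 le_rfl hv
        (live_drop_one H S v (new_pos.2 hv)) (by norm_num) (by norm_num)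
        (fun T hT hlt => ih _ (hS ▸ hlt) T rfl (hM.mono hT))

include h5

lemma phase2 : ∀ (m : ℕ) (S : Finset V), whiteCnt S = m → MaxNew H 2 S →
    (domGameVal H true S : ℝ) ≤ 7/12 * whiteCnt S + 1/12 * liveCnt H S := by
  intro m
  induction m using Nat.strong_induction_on with
  | _ m ih =>
    intro S hS hM
    rcases maxNew_or H 1 S with h | hex
    · have h1 := phase1 H _ S rfl h
      have h2 : (whiteCnt S : ℝ) * 5 ≤ liveCnt H S * (1 : ℕ) := by
        exact_mod_cast live_count H h5 S 1 h
      push_cast at h2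
      linarith
    · obtain ⟨v, hv, hl⟩ := two_red H S hM hex
      exact game_step H _ _ (by norm_num) (by norm_num) S v 2 2 (by norm_num) hv
        hl (by norm_num) (by norm_num)
        (fun T hT hlt => ih _ (hS ▸ hlt) T rfl (hM.mono hT))

lemma phase3 : ∀ (m : ℕ) (S : Finset V), whiteCnt S = m → MaxNew H 3 S →
    (domGameVal H true S : ℝ) ≤ 41/96 * whiteCnt S + 14/96 * liveCnt H S := by
  intro m
  induction m using Nat.strong_induction_on with
  | _ m ih =>
    intro S hS hM
    rcases maxNew_or H 2 S with h | ⟨v, hv⟩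
    · have h1 := phase2 H h5 _ S rfl h
      have h2 : (whiteCnt S : ℝ) * 5 ≤ liveCnt H S * (2 : ℕ) := by
        exact_mod_cast live_count H h5 S 2 h
      push_cast at h2
      linarith
    · exact game_step H _ _ (by norm_num) (by norm_num) S v 3 1 (by norm_num) hv
        (live_drop_one H S v (new_pos.2 (by omega))) (by norm_num) (by norm_num)
        (fun T hT hlt => ih _ (hS ▸ hlt) T rfl (hM.mono hT))

lemma phase4 : ∀ (m : ℕ) (S : Finset V), whiteCnt S = m → MaxNew H 4 S →
    (domGameVal H true S : ℝ) ≤ 574/1824 * whiteCnt S + 389/1824 * liveCnt H S := by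
  intro m
  induction m using Nat.strong_induction_on with
  | _ m ih =>
    intro S hS hM
    rcases maxNew_or H 3 S with h | ⟨v, hv⟩
    · have h1 := phase3 H h5 _ S rfl h
      have h2 : (whiteCnt S : ℝ) * 5 ≤ liveCnt H S * (3 : ℕ) := by
        exact_mod_cast live_count H h5 S 3 h
      push_cast at h2
      linarith
    · exact game_step H _ _ (by norm_num) (by norm_num) S v 4 1 (by norm_num) hv
        (live_drop_one H S v (new_pos.2 (by omega))) (by norm_num) (by norm_num)
        (fun T hT hlt => ih _ (hS ▸ hlt) T rfl (hM.mono hT))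

lemma phase5 : ∀ (m : ℕ) (S : Finset V), whiteCnt S = m →
    (domGameVal H true S : ℝ) ≤ 4879/20064 * whiteCnt S + 5427/20064 * liveCnt H S := by
  intro m
  induction m using Nat.strong_induction_on with
  | _ m ih =>
    intro S hS
    rcases maxNew_or H 4 S with h | ⟨v, hv⟩
    · have h1 := phase4 H h5 _ S rfl h
      have h2 : (whiteCnt S : ℝ) * 5 ≤ liveCnt H S * (4 : ℕ) := by
        exact_mod_cast live_count H h5 S 4 h
      push_cast at h2
      linarith
    · exact game_step H _ _ (by norm_num) (by norm_num) S v 5 1 (by norm_num) hv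
        (live_drop_one H S v (new_pos.2 (by omega))) (by norm_num) (by norm_num)
        (fun T hT hlt => ih _ (hS ▸ hlt) T rfl)

end

/-- if `H` is a 5-uniform hypergraph on `n` vertices with no isolated
vertices, then `γ_g(H) ≤ (37/72) n`. -/
theorem stmt_16 (V : Type) [Fintype V] (H : Finset (Finset V))
    (huniform : ∀ e ∈ H, e.card = 5)
    (hisol : ∀ v : V, ∃ u : V, u ≠ v ∧ ∃ e ∈ H, u ∈ e ∧ v ∈ e) :
    (gammaGame H : ℝ) ≤ 37 / 72 * Fintype.card V := by
  have h5 : ∀ v, 5 ≤ (closedNbhd H v).card := by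
    intro v
    obtain ⟨u, -, e, he, -, hv⟩ := hisol v
    rw [← huniform e he]
    exact Finset.card_le_card (fun x hx => mem_cn.2 (Or.inr ⟨e, he, hx, hv⟩))
  have h := phase5 H h5 _ ∅ rfl
  have h1 : (whiteCnt (∅ : Finset V) : ℝ) ≤ Fintype.card V := by
    exact_mod_cast Finset.card_le_univ _
  have h2 : (liveCnt H (∅ : Finset V) : ℝ) ≤ Fintype.card V := by
    exact_mod_cast Finset.card_le_univ _
  have h3 : (0 : ℝ) ≤ Fintype.card V := by positivity
  unfold gammaGame
  linarith
end
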